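/- For every infinite binary sequence x ∈ B^ℕ, 2·γ̲(x) ≤ h̲(x) ≤ H(γ̲(x)). -/

import Mathlib

open Filter Topology

/-- The factor of length `len` of the sequence `x` starting at position `i`. -/
def factor (x : ℕ → Bool) (i len : ℕ) : List Bool :=
  List.ofFn (fun j : Fin len => x (i + j))

/-- Number of (possibly overlapping) occurrences of the word `u`
in the prefix `x[0:n)` of the sequence `x`. -/
def occ (x : ℕ → Bool) (n : ℕ) (u : List Bool) : ℕ :=
  ((Finset.range (n + 1 - u.length)).filter (fun i => factor x i u.length = u)).card

/-- Non-aligned `ℓ`-block entropy of the prefix `x[0:n)`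
(logs are base 2, with the convention `0 · log 0 = 0`). -/
noncomputable def hBlock (ℓ : ℕ) (x : ℕ → Bool) (n : ℕ) : ℝ :=
  -(1 / (ℓ : ℝ)) * ∑ u : Fin ℓ → Bool,
    ((occ x n (List.ofFn u) : ℝ) / ((n : ℝ) - ℓ + 1)) *
      Real.logb 2 ((occ x n (List.ofFn u) : ℝ) / ((n : ℝ) - ℓ + 1))

/-- `h̲(x) = lim_{ℓ→∞} liminf_{n→∞} h_ℓ(x[0:n))` (the limit in `ℓ` exists). -/
noncomputable def hLow (x : ℕ → Bool) : ℝ :=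
  atTop.liminf fun ℓ => atTop.liminf fun n => hBlock ℓ x n

/-- `h̄(x) = lim_{ℓ→∞} limsup_{n→∞} h_ℓ(x[0:n))` (the limit in `ℓ` exists). -/
noncomputable def hUp (x : ℕ → Bool) : ℝ :=
  atTop.limsup fun ℓ => atTop.limsup fun n => hBlock ℓ x n

/-- `γ_ℓ(x[0:n))`: normalized minimal number of prediction errors when predicting
`x[i]` from the preceding `ℓ` symbols `x[i-ℓ:i)`, for `i ∈ {ℓ,…,n-1}`. -/
noncomputable def gammaWord (ℓ : ℕ) (x : ℕ → Bool) (n : ℕ) : ℝ :=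
  (1 / ((n : ℝ) - ℓ)) *
    ((Finset.univ : Finset ((Fin ℓ → Bool) → Bool)).inf' Finset.univ_nonempty
      (fun f => ((((Finset.Ico ℓ n).filter
        (fun i => x i ≠ f (fun j => x (i - ℓ + j)))).card : ℝ))))

/-- `β_ℓ(x[0:n))`: normalized minimal number of prediction errors when predicting
`x[i]` from the following `ℓ` symbols `x[i+1:i+ℓ+1)`, for `i ∈ {0,…,n-ℓ-1}`. -/
noncomputable def betaWord (ℓ : ℕ) (x : ℕ → Bool) (n : ℕ) : ℝ :=
  (1 / ((n : ℝ) - ℓ)) *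
    ((Finset.univ : Finset ((Fin ℓ → Bool) → Bool)).inf' Finset.univ_nonempty
      (fun f => ((((Finset.range (n - ℓ)).filter
        (fun i => x i ≠ f (fun j => x (i + 1 + j)))).card : ℝ))))

/-- `γ̲(x) = lim_{ℓ→∞} liminf_{n→∞} γ_ℓ(x[0:n))` (the limit in `ℓ` exists, by monotonicity). -/
noncomputable def gammaLow (x : ℕ → Bool) : ℝ :=
  atTop.liminf fun ℓ => atTop.liminf fun n => gammaWord ℓ x n

/-- `γ̄(x) = lim_{ℓ→∞} limsup_{n→∞} γ_ℓ(x[0:n))` (the limit in `ℓ` exists, by monotonicity). -/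
noncomputable def gammaUp (x : ℕ → Bool) : ℝ :=
  atTop.limsup fun ℓ => atTop.limsup fun n => gammaWord ℓ x n

/-- `β̲(x) = lim_{ℓ→∞} liminf_{n→∞} β_ℓ(x[0:n))` (the limit in `ℓ` exists, by monotonicity). -/
noncomputable def betaLow (x : ℕ → Bool) : ℝ :=
  atTop.liminf fun ℓ => atTop.liminf fun n => betaWord ℓ x n

/-- `β̄(x) = lim_{ℓ→∞} limsup_{n→∞} β_ℓ(x[0:n))` (the limit in `ℓ` exists, by monotonicity). -/
noncomputable def betaUp (x : ℕ → Bool) : ℝ :=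
  atTop.limsup fun ℓ => atTop.limsup fun n => betaWord ℓ x n

/-- Binary Shannon entropy function `H(α) = -α log α - (1-α) log (1-α)` (base-2 logs). -/
noncomputable def binEntropy (a : ℝ) : ℝ :=
  -(a * Real.logb 2 a) - (1 - a) * Real.logb 2 (1 - a)

/-- Conditional block entropy `Hc^{n,ℓ}(x)`:
`-Σ_{ā ∈ B^ℓ, a ∈ B, p(ā·a) > 0} p(ā·a) · log (p(ā·a)/p(ā))`, where
`p(ā) = occ(x[0:n-1), ā)/(n-ℓ)` and `p(ā·a) = occ(x[0:n), ā·a)/(n-ℓ)`. -/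
noncomputable def condEntropy (ℓ : ℕ) (x : ℕ → Bool) (n : ℕ) : ℝ :=
  -∑ u : Fin ℓ → Bool, ∑ a : Bool,
    (if 0 < ((occ x n (List.ofFn u ++ [a]) : ℝ) / ((n : ℝ) - ℓ)) then
      ((occ x n (List.ofFn u ++ [a]) : ℝ) / ((n : ℝ) - ℓ)) *
        Real.logb 2 (((occ x n (List.ofFn u ++ [a]) : ℝ) / ((n : ℝ) - ℓ)) /
          ((occ x (n - 1) (List.ofFn u) : ℝ) / ((n : ℝ) - ℓ)))
    else 0)

/-- The real number in `[0,1]` denoted by the binary sequence `x`. -/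
noncomputable def val (x : ℕ → Bool) : ℝ :=
  ∑' n : ℕ, (if x n then (1 : ℝ) else 0) / 2 ^ (n + 1)

/-!
Write `p(u)` for the frequency of the word `u` among the factors of `x` starting before position
`M`. The optimal predictor from `k` letters errs with frequency
`G k = ∑ u, min (p (u0)) (p (u1))`, and the unnormalised `k`-block entropy `E k` grows by
`E (k + 1) - E k = ∑ u, p(u) H(min (p (u0)) (p (u1)) / p(u))`. Concavity of the binary entropy
function `H` gives `2t ≤ H t` on `[0, 1/2]` and Jensen's inequality, hence (in bits)
`2 * G k ≤ E (k + 1) - E k ≤ H (G k)`. A longer past helps to predict, up to a boundary effect: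
`G k ≤ G m + (k - m) / M` for `m ≤ k`. Summing the increments and dividing by `k` yields
`2 * (G k - k / M) ≤ E k / k ≤ m / k + H (G m + k / M)`, where the `m` increments not controlled by
`G m` were bounded by `1`. Now let `M`, then `k`, then `m` tend to infinity; as `H` is continuous
and increasing on `[0, 1/2]`, where `G` takes its values, it commutes with the lower limits.
-/

section SplitEntropy

/-- The entropy (in nats) gained when an atom of mass `a + b` is split into two atoms of masses `a`
and `b`. -/
noncomputable def splitEntropy (a b : ℝ) : ℝ :=
  Real.negMulLog a + Real.negMulLog b - Real.negMulLog (a + b)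

lemma splitEntropy_comm (a b : ℝ) : splitEntropy a b = splitEntropy b a := by
  unfold splitEntropy
  rw [add_comm (Real.negMulLog a), add_comm a]

variable {a b : ℝ}

lemma add_mul_min_div_add (ha : 0 ≤ a) (hb : 0 ≤ b) : (a + b) * (min a b / (a + b)) = min a b :=
  mul_div_cancel_of_imp' fun h => by
    obtain ⟨rfl, rfl⟩ := (add_eq_zero_iff_of_nonneg ha hb).mp h
    exact min_self 0

lemma min_div_add_mem_Icc (ha : 0 ≤ a) (hb : 0 ≤ b) : min a b / (a + b) ∈ Set.Icc 0 2⁻¹ := by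
  refine ⟨by positivity, div_le_of_le_mul₀ (by positivity) (by positivity) ?_⟩
  linarith [min_le_left a b, min_le_right a b]

lemma splitEntropy_eq_mul_binEntropy (ha : 0 ≤ a) (hb : 0 ≤ b) :
    splitEntropy a b = (a + b) * Real.binEntropy (min a b / (a + b)) := by
  wlog hab : a ≤ b generalizing a b
  · rw [splitEntropy_comm, min_comm, add_comm a, this hb ha (le_of_not_ge hab)]
  rw [min_eq_left hab]
  rcases ha.eq_or_lt with rfl | ha_pos
  · simp [splitEntropy]
  have hb_pos : 0 < b := ha_pos.trans_le hab
  have hsum_pos : 0 < a + b := add_pos ha_pos hb_pos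
  have hcompl : 1 - a / (a + b) = b / (a + b) := by field_simp; ring
  rw [Real.binEntropy_eq_negMulLog_add_negMulLog_one_sub, hcompl]
  simp only [splitEntropy, Real.negMulLog, Real.log_div ha_pos.ne' hsum_pos.ne',
    Real.log_div hb_pos.ne' hsum_pos.ne']
  field_simp
  ring

lemma two_mul_log_two_mul_le_binEntropy {p : ℝ} (hp : p ∈ Set.Icc 0 2⁻¹) :
    2 * Real.log 2 * p ≤ Real.binEntropy p := by
  obtain ⟨hp_nonneg, hp_le⟩ := hp
  have hconcave := Real.strictConcave_binEntropy.concaveOn.2 (Set.left_mem_Icc.mpr zero_le_one)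
    (show (2⁻¹ : ℝ) ∈ Set.Icc 0 1 by norm_num) (show 0 ≤ 1 - 2 * p by linarith)
    (show 0 ≤ 2 * p by linarith) (sub_add_cancel 1 (2 * p))
  have hcomb : (1 - 2 * p) * 0 + 2 * p * 2⁻¹ = p := by ring
  simp only [smul_eq_mul, Real.binEntropy_zero, Real.binEntropy_two_inv, hcomb] at hconcave
  linarith

lemma two_mul_log_two_mul_min_le_splitEntropy (ha : 0 ≤ a) (hb : 0 ≤ b) :
    2 * Real.log 2 * min a b ≤ splitEntropy a b :=
  calc 2 * Real.log 2 * min a b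
      = (a + b) * (2 * Real.log 2 * (min a b / (a + b))) := by
        rw [mul_left_comm, add_mul_min_div_add ha hb]
    _ ≤ (a + b) * Real.binEntropy (min a b / (a + b)) := by
        gcongr
        exact two_mul_log_two_mul_le_binEntropy (min_div_add_mem_Icc ha hb)
    _ = splitEntropy a b := (splitEntropy_eq_mul_binEntropy ha hb).symm

lemma sum_splitEntropy_le_binEntropy {ι : Type*} {s : Finset ι} {p q : ι → ℝ}
    (hp : ∀ i ∈ s, 0 ≤ p i) (hq : ∀ i ∈ s, 0 ≤ q i) (hsum : ∑ i ∈ s, (p i + q i) = 1) :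
    ∑ i ∈ s, splitEntropy (p i) (q i) ≤ Real.binEntropy (∑ i ∈ s, min (p i) (q i)) := by
  have hmem : ∀ i ∈ s, min (p i) (q i) / (p i + q i) ∈ Set.Icc (0 : ℝ) 1 := fun i hi =>
    Set.Icc_subset_Icc_right (by norm_num) (min_div_add_mem_Icc (hp i hi) (hq i hi))
  calc ∑ i ∈ s, splitEntropy (p i) (q i)
      = ∑ i ∈ s, (p i + q i) • Real.binEntropy (min (p i) (q i) / (p i + q i)) :=
        Finset.sum_congr rfl fun i hi => splitEntropy_eq_mul_binEntropy (hp i hi) (hq i hi)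
    _ ≤ Real.binEntropy (∑ i ∈ s, (p i + q i) • (min (p i) (q i) / (p i + q i))) :=
        Real.strictConcave_binEntropy.concaveOn.le_map_sum
          (fun i hi => add_nonneg (hp i hi) (hq i hi)) hsum hmem
    _ = Real.binEntropy (∑ i ∈ s, min (p i) (q i)) :=
        congrArg _ (Finset.sum_congr rfl fun i hi => add_mul_min_div_add (hp i hi) (hq i hi))

end SplitEntropy

section BlockCount

variable {α : Type*}

/-- The factor `x[i:i+k)` as a word indexed by `Fin k`. -/
def window (x : ℕ → α) (k i : ℕ) : Fin k → α := fun j => x (i + j)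

lemma window_succ (x : ℕ → α) (k i : ℕ) :
    window x (k + 1) i = Fin.snoc (window x k i) (x (i + k)) := by
  rw [← Fin.snoc_init_self (window x (k + 1) i)]
  rfl

lemma tail_window (x : ℕ → α) (k i : ℕ) : Fin.tail (window x (k + 1) i) = window x k (i + 1) := by
  funext j
  simp only [Fin.tail, window, Fin.val_succ, add_assoc, add_comm 1]

variable [DecidableEq α]

/-- The number of occurrences of the word `u` in `x` that start before position `M`. Counting by
starting positions makes the counts of words of different lengths exactly compatible. -/
def blockCount (x : ℕ → α) (k M : ℕ) (u : Fin k → α) : ℕ :=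
  ((Finset.range M).filter fun i => window x k i = u).card

/-- The frequency of the word `u` among the factors of `x` that start before position `M`; all
frequencies are `0` when `M = 0`. -/
noncomputable def blockFreq (x : ℕ → α) (k M : ℕ) (u : Fin k → α) : ℝ :=
  blockCount x k M u / M

lemma blockCount_snoc (x : ℕ → α) (k M : ℕ) (u : Fin k → α) (a : α) :
    blockCount x (k + 1) M (Fin.snoc u a) =
      ((Finset.range M).filter fun i => window x k i = u ∧ x (i + k) = a).card := by
  simp only [blockCount, window_succ, Fin.snoc_inj]

lemma blockFreq_nonneg (x : ℕ → α) (k M : ℕ) (u : Fin k → α) : 0 ≤ blockFreq x k M u := by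
  unfold blockFreq
  positivity

lemma blockFreq_le_one (x : ℕ → α) (k M : ℕ) (u : Fin k → α) : blockFreq x k M u ≤ 1 := by
  refine div_le_one_of_le₀ (Nat.cast_le.mpr ?_) M.cast_nonneg
  exact (Finset.card_filter_le _ _).trans_eq (Finset.card_range M)

variable [Fintype α]

lemma sum_blockCount (x : ℕ → α) (k M : ℕ) : ∑ u, blockCount x k M u = M := by
  unfold blockCount
  rw [← Finset.card_eq_sum_card_fiberwise (by simp), Finset.card_range]

lemma sum_blockFreq (x : ℕ → α) (k : ℕ) {M : ℕ} (hM : M ≠ 0) : ∑ u, blockFreq x k M u = 1 := by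
  simp only [blockFreq]
  rw [← Finset.sum_div, ← Nat.cast_sum, sum_blockCount, div_self (Nat.cast_ne_zero.mpr hM)]

lemma sum_blockCount_snoc (x : ℕ → α) (k M : ℕ) (u : Fin k → α) :
    ∑ a, blockCount x (k + 1) M (Fin.snoc u a) = blockCount x k M u := by
  simp only [blockCount_snoc, ← Finset.filter_filter]
  exact (Finset.card_eq_sum_card_fiberwise (by simp)).symm

lemma sum_blockFreq_snoc (x : ℕ → α) (k M : ℕ) (u : Fin k → α) :
    ∑ a, blockFreq x (k + 1) M (Fin.snoc u a) = blockFreq x k M u := by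
  simp only [blockFreq]
  rw [← Finset.sum_div, ← Nat.cast_sum, sum_blockCount_snoc]

end BlockCount

section PredictionError

variable {α : Type*} [DecidableEq α]

/-- The number of errors of the predictor `f` on the first `M` windows of length `k`. -/
def predictionErrors (x : ℕ → α) (k M : ℕ) (f : (Fin k → α) → α) : ℕ :=
  ((Finset.range M).filter fun i => x (i + k) ≠ f (window x k i)).card

/-- The least frequency of errors, among all predictors, on the first `M` windows of length `k`. -/
noncomputable def minErrorRate (x : ℕ → α) (k M : ℕ) : ℝ :=
  (⨅ f : (Fin k → α) → α, (predictionErrors x k M f : ℝ)) / M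

lemma iInf_predictionErrors_le (x : ℕ → α) (k M : ℕ) (f : (Fin k → α) → α) :
    ⨅ g : (Fin k → α) → α, (predictionErrors x k M g : ℝ) ≤ predictionErrors x k M f :=
  ciInf_le ⟨0, by rintro _ ⟨g, rfl⟩; exact Nat.cast_nonneg _⟩ f

lemma predictionErrors_comp_tail_le (x : ℕ → α) (k M : ℕ) (f : (Fin k → α) → α) :
    predictionErrors x (k + 1) M (fun u => f (Fin.tail u)) ≤ predictionErrors x k M f + 1 := by
  let IsError (i : ℕ) : Prop := x (i + k) ≠ f (window x k i)
  have hshift (i : ℕ) :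
      x (i + (k + 1)) ≠ f (Fin.tail (window x (k + 1) i)) ↔ IsError (i + 1) := by
    rw [tail_window, add_comm k, ← add_assoc]
  simp only [predictionErrors, hshift, ← Nat.count_eq_card_filter_range]
  calc Nat.count (fun i => IsError (i + 1)) M
      ≤ Nat.count IsError (M + 1) := by rw [Nat.count_succ']; exact Nat.le_add_right _ _
    _ ≤ Nat.count IsError M + 1 := by rw [Nat.count_succ]; gcongr; split_ifs <;> simp

lemma minErrorRate_succ_le [Nonempty α] (x : ℕ → α) (k M : ℕ) :
    minErrorRate x (k + 1) M ≤ minErrorRate x k M + 1 / M := by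
  unfold minErrorRate
  rw [← add_div]
  gcongr
  rw [← sub_le_iff_le_add]
  refine le_ciInf fun f => sub_le_iff_le_add.mpr ?_
  exact (iInf_predictionErrors_le x (k + 1) M _).trans
    (mod_cast predictionErrors_comp_tail_le x k M f)

lemma minErrorRate_le_add [Nonempty α] (x : ℕ → α) (M : ℕ) {k l : ℕ} (hkl : k ≤ l) :
    minErrorRate x l M ≤ minErrorRate x k M + l / M := by
  suffices h : minErrorRate x l M ≤ minErrorRate x k M + (l - k) / M by
    refine h.trans ?_
    gcongr
    exact sub_le_self _ k.cast_nonneg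
  induction l, hkl using Nat.le_induction with
  | base => simp
  | succ l _ ih =>
    have hsplit : ((l + 1 : ℕ) - k : ℝ) / M = (l - k) / M + 1 / M := by push_cast; ring
    linarith [minErrorRate_succ_le x l M]

end PredictionError

section Binary

variable (x : ℕ → Bool) (k M : ℕ)

lemma predictionErrors_eq_sum (f : (Fin k → Bool) → Bool) :
    predictionErrors x k M f =
      ∑ u, blockCount x (k + 1) M (Fin.snoc u (!f u)) := by
  unfold predictionErrors
  rw [Finset.card_eq_sum_card_fiberwise (f := window x k) (t := Finset.univ) (by simp)]
  refine Finset.sum_congr rfl fun u _ => ?_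
  rw [blockCount_snoc, Finset.filter_filter]
  congr 1
  refine Finset.filter_congr fun i _ => ?_
  rw [and_comm]
  refine and_congr_right fun hu => ?_
  rw [hu, Bool.eq_not]

lemma blockFreq_snoc_false_add_snoc_true (u : Fin k → Bool) :
    blockFreq x (k + 1) M (Fin.snoc u false) +
      blockFreq x (k + 1) M (Fin.snoc u true) = blockFreq x k M u := by
  rw [← sum_blockFreq_snoc x k M u, Fintype.sum_bool, add_comm]

lemma minErrorRate_eq_sum_min :
    minErrorRate x k M =
      ∑ u, min (blockFreq x (k + 1) M (Fin.snoc u false))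
        (blockFreq x (k + 1) M (Fin.snoc u true)) := by
  simp only [blockFreq, min_div_div_right M.cast_nonneg, ← Finset.sum_div, ← Nat.cast_min,
    ← Nat.cast_sum, minErrorRate]
  congr 1
  refine le_antisymm ?_ (le_ciInf fun f => ?_)
  · let majority (u : Fin k → Bool) : Bool :=
      decide (blockCount x (k + 1) M (Fin.snoc u false) ≤
        blockCount x (k + 1) M (Fin.snoc u true))
    refine (iInf_predictionErrors_le x k M majority).trans_eq ?_
    rw [predictionErrors_eq_sum]
    congr 1
    refine Finset.sum_congr rfl fun u _ => ?_
    grind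
  · rw [predictionErrors_eq_sum]
    gcongr with u
    cases f u
    exacts [min_le_right _ _, min_le_left _ _]

lemma minErrorRate_mem_Icc : minErrorRate x k M ∈ Set.Icc 0 2⁻¹ := by
  rw [minErrorRate_eq_sum_min]
  refine ⟨Finset.sum_nonneg fun u _ => le_min (blockFreq_nonneg ..) (blockFreq_nonneg ..), ?_⟩
  rcases eq_or_ne M 0 with rfl | hM
  · simp [blockFreq]
  calc _ ≤ ∑ u, blockFreq x k M u / 2 := by
        gcongr with u
        rw [← blockFreq_snoc_false_add_snoc_true x k M u]
        grind
    _ = 2⁻¹ := by rw [← Finset.sum_div, sum_blockFreq x k hM, one_div]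

end Binary

section BlockEntropy

/-- The entropy, in nats and not divided by `k`, of the distribution of the factors of length `k`
of `x` that start before position `M`. -/
noncomputable def blockEntropy {α : Type*} [DecidableEq α] [Fintype α] (x : ℕ → α) (k M : ℕ) : ℝ :=
  ∑ u, Real.negMulLog (blockFreq x k M u)

section Alphabet

variable {α : Type*} [DecidableEq α] [Fintype α] (x : ℕ → α) (k M : ℕ)

lemma blockEntropy_nonneg : 0 ≤ blockEntropy x k M :=
  Finset.sum_nonneg fun _ _ => Real.negMulLog_nonneg (blockFreq_nonneg ..) (blockFreq_le_one ..)

lemma blockEntropy_zero_left : blockEntropy x 0 M = 0 := by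
  rcases eq_or_ne M 0 with rfl | hM
  · simp [blockEntropy, blockFreq]
  have hfreq := sum_blockFreq x 0 hM
  simp only [Fintype.sum_unique] at hfreq
  simp [blockEntropy, hfreq]

lemma blockEntropy_eq_sum_range :
    blockEntropy x k M =
      ∑ i ∈ Finset.range k, (blockEntropy x (i + 1) M - blockEntropy x i M) := by
  rw [Finset.sum_range_sub fun i => blockEntropy x i M, blockEntropy_zero_left, sub_zero]

lemma blockEntropy_succ :
    blockEntropy x (k + 1) M =
      ∑ u : Fin k → α, ∑ a,
        Real.negMulLog (blockFreq x (k + 1) M (Fin.snoc u a)) := by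
  rw [Finset.sum_comm, ← Fintype.sum_prod_type']
  exact ((Fin.snocEquiv fun _ : Fin (k + 1) => α).sum_comp _).symm

end Alphabet

variable (x : ℕ → Bool) (k M : ℕ)

lemma blockEntropy_succ_sub :
    blockEntropy x (k + 1) M - blockEntropy x k M =
      ∑ u, splitEntropy (blockFreq x (k + 1) M (Fin.snoc u false))
        (blockFreq x (k + 1) M (Fin.snoc u true)) := by
  rw [blockEntropy_succ, blockEntropy, ← Finset.sum_sub_distrib]
  refine Finset.sum_congr rfl fun u _ => ?_
  rw [splitEntropy, blockFreq_snoc_false_add_snoc_true, Fintype.sum_bool, add_comm]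

lemma two_mul_log_two_mul_minErrorRate_le :
    2 * Real.log 2 * minErrorRate x k M ≤ blockEntropy x (k + 1) M - blockEntropy x k M := by
  rw [blockEntropy_succ_sub, minErrorRate_eq_sum_min, Finset.mul_sum]
  gcongr
  exact two_mul_log_two_mul_min_le_splitEntropy (blockFreq_nonneg ..) (blockFreq_nonneg ..)

lemma blockEntropy_succ_sub_le :
    blockEntropy x (k + 1) M - blockEntropy x k M ≤ Real.binEntropy (minErrorRate x k M) := by
  rcases eq_or_ne M 0 with rfl | hM
  · simp [blockEntropy, blockFreq, minErrorRate]
  rw [blockEntropy_succ_sub, minErrorRate_eq_sum_min]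
  refine sum_splitEntropy_le_binEntropy (fun _ _ => blockFreq_nonneg ..)
    (fun _ _ => blockFreq_nonneg ..) ?_
  simp only [blockFreq_snoc_false_add_snoc_true, sum_blockFreq x k hM]

lemma blockEntropy_le_mul_log_two : blockEntropy x k M ≤ k * Real.log 2 := by
  have h := Finset.sum_le_card_nsmul (Finset.range k) _ (Real.log 2) fun i _ =>
    (blockEntropy_succ_sub_le x i M).trans Real.binEntropy_le_log_two
  rwa [← blockEntropy_eq_sum_range, Finset.card_range, nsmul_eq_mul] at h

end BlockEntropy

section MonoBinEntropy

lemma binEntropy_eq_div_log_two (p : ℝ) : binEntropy p = Real.binEntropy p / Real.log 2 := by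
  rw [Real.binEntropy_eq_negMulLog_add_negMulLog_one_sub]
  simp only [binEntropy, Real.negMulLog, Real.logb]
  ring

/-- The binary entropy function on `[0, 1/2]`, extended to a monotone function on `ℝ` that is
constant on either side; unlike `binEntropy` itself, it commutes with lower limits. -/
noncomputable def monoBinEntropy : ℝ → ℝ :=
  Set.IccExtend (a := 0) (b := (2 : ℝ)⁻¹) (by norm_num) fun p => binEntropy p

lemma monoBinEntropy_of_mem {p : ℝ} (hp : p ∈ Set.Icc 0 2⁻¹) :
    monoBinEntropy p = binEntropy p :=
  Set.IccExtend_of_mem _ _ hp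

lemma monoBinEntropy_nonneg (p : ℝ) : 0 ≤ monoBinEntropy p := by
  have hp := (Set.projIcc (0 : ℝ) 2⁻¹ (by norm_num) p).2
  simp only [monoBinEntropy, Set.IccExtend, Function.comp_apply, binEntropy_eq_div_log_two]
  exact div_nonneg (Real.binEntropy_nonneg hp.1 (hp.2.trans (by norm_num))) (by positivity)

lemma monotone_monoBinEntropy : Monotone monoBinEntropy := by
  refine Monotone.IccExtend _ fun p q hpq => ?_
  simp only [binEntropy_eq_div_log_two]
  gcongr
  exact Real.binEntropy_strictMonoOn.monotoneOn p.2 q.2 hpq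

lemma continuous_monoBinEntropy : Continuous monoBinEntropy := by
  refine Continuous.Icc_extend' ?_
  simp only [binEntropy_eq_div_log_two]
  fun_prop

end MonoBinEntropy

section EntropyRate

/-- The block entropy in bits per letter, with the value `0` at `k = 0`. -/
noncomputable def entropyRate (x : ℕ → Bool) (k M : ℕ) : ℝ :=
  blockEntropy x k M / (k * Real.log 2)

variable (x : ℕ → Bool) (k M : ℕ)

lemma entropyRate_mem_Icc : entropyRate x k M ∈ Set.Icc 0 1 :=
  ⟨div_nonneg (blockEntropy_nonneg x k M) (by positivity),
    div_le_one_of_le₀ (blockEntropy_le_mul_log_two x k M) (by positivity)⟩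

variable {k}

lemma two_mul_minErrorRate_sub_le_entropyRate (hk : 0 < k) :
    2 * (minErrorRate x k M - k / M) ≤ entropyRate x k M := by
  have hincrement : ∀ i ∈ Finset.range k, 2 * Real.log 2 * (minErrorRate x k M - k / M) ≤
      blockEntropy x (i + 1) M - blockEntropy x i M := by
    intro i hi
    refine le_trans ?_ (two_mul_log_two_mul_minErrorRate_le x i M)
    gcongr
    exact sub_le_iff_le_add.mpr (minErrorRate_le_add x M (Finset.mem_range.mp hi).le)
  have hsum := Finset.card_nsmul_le_sum _ _ _ hincrement
  rw [← blockEntropy_eq_sum_range, Finset.card_range, nsmul_eq_mul] at hsum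
  rw [entropyRate, le_div_iff₀ (by positivity)]
  linarith

lemma blockEntropy_sub_le {m : ℕ} (hmk : m ≤ k) :
    blockEntropy x k M - blockEntropy x m M ≤
      k * (Real.log 2 * monoBinEntropy (minErrorRate x m M + k / M)) := by
  have hincrement : ∀ i ∈ Finset.Ico m k, blockEntropy x (i + 1) M - blockEntropy x i M ≤
      Real.log 2 * monoBinEntropy (minErrorRate x m M + k / M) := by
    intro i hi
    obtain ⟨hmi, hik⟩ := Finset.mem_Ico.mp hi
    calc blockEntropy x (i + 1) M - blockEntropy x i M
        ≤ Real.binEntropy (minErrorRate x i M) := blockEntropy_succ_sub_le x i M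
      _ = Real.log 2 * monoBinEntropy (minErrorRate x i M) := by
        rw [monoBinEntropy_of_mem (minErrorRate_mem_Icc x i M), binEntropy_eq_div_log_two]
        field_simp
      _ ≤ Real.log 2 * monoBinEntropy (minErrorRate x m M + k / M) := by
        gcongr
        refine monotone_monoBinEntropy ((minErrorRate_le_add x M hmi).trans ?_)
        gcongr
  have hsum := Finset.sum_le_card_nsmul _ _ _ hincrement
  rw [Finset.sum_Ico_eq_sub _ hmk, ← blockEntropy_eq_sum_range, ← blockEntropy_eq_sum_range,
    Nat.card_Ico, nsmul_eq_mul] at hsum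
  refine hsum.trans ?_
  have hnonneg := monoBinEntropy_nonneg (minErrorRate x m M + k / M)
  gcongr
  exact Nat.sub_le k m

lemma entropyRate_le {m : ℕ} (hk : 0 < k) (hmk : m ≤ k) :
    entropyRate x k M ≤ m / k + monoBinEntropy (minErrorRate x m M + k / M) := by
  have hinitial := blockEntropy_le_mul_log_two x m M
  have hremaining := blockEntropy_sub_le x M hmk
  rw [entropyRate, div_le_iff₀ (by positivity)]
  calc blockEntropy x k M
      ≤ m * Real.log 2 + k * (Real.log 2 * monoBinEntropy (minErrorRate x m M + k / M)) := by
        linarith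
    _ = (m / k + monoBinEntropy (minErrorRate x m M + k / M)) * (k * Real.log 2) := by
        field_simp

end EntropyRate

section Liminf

variable {ι : Type*} {F : Filter ι} [F.NeBot]

lemma liminf_mem_Icc {β : Type*} [ConditionallyCompleteLinearOrder β] {u : ι → β} {a b : β}
    (hu : ∀ i, u i ∈ Set.Icc a b) : F.liminf u ∈ Set.Icc a b :=
  ⟨le_liminf_of_le (isBoundedUnder_of ⟨b, fun i => (hu i).2⟩).isCoboundedUnder_ge
      (Eventually.of_forall fun i => (hu i).1),
    liminf_le_of_frequently_le (Frequently.of_forall fun i => (hu i).2)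
      (isBoundedUnder_of ⟨a, fun i => (hu i).1⟩)⟩

variable {u v : ι → ℝ}

lemma liminf_add_of_tendsto_zero (hv : Tendsto v F (𝓝 0))
    (hu : IsBoundedUnder (· ≥ ·) F u) (hu' : IsCoboundedUnder (· ≥ ·) F u) :
    F.liminf (fun i => u i + v i) = F.liminf u := by
  have hlower := le_liminf_add hv.isBoundedUnder_ge hv.isBoundedUnder_le hu hu'
  have hupper := liminf_add_le hv.isBoundedUnder_ge hv.isBoundedUnder_le hu hu'
  rw [hv.liminf_eq, zero_add, add_comm] at hlower
  rw [hv.limsup_eq, zero_add, add_comm] at hupper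
  exact le_antisymm hupper hlower

variable {w : ι → ℝ} {φ : ℝ → ℝ} {a b c : ℝ}

lemma map_liminf_eq_liminf_map_add (hφ : Monotone φ) (hφ' : Continuous φ)
    (hv : Tendsto v F (𝓝 0)) (hu : ∀ i, u i ∈ Set.Icc a b) :
    φ (F.liminf u) = F.liminf fun i => φ (u i + v i) := by
  have hbelow : IsBoundedUnder (· ≥ ·) F u := isBoundedUnder_of ⟨a, fun i => (hu i).1⟩
  have habove : IsBoundedUnder (· ≤ ·) F u := isBoundedUnder_of ⟨b, fun i => (hu i).2⟩
  rw [← liminf_add_of_tendsto_zero hv hbelow habove.isCoboundedUnder_ge]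
  refine hφ.map_liminf_of_continuousAt _ hφ'.continuousAt ?_ ?_
  · exact (isBoundedUnder_le_add habove hv.isBoundedUnder_le).isCoboundedUnder_ge
  · exact isBoundedUnder_ge_add hbelow hv.isBoundedUnder_ge

lemma map_liminf_le_liminf (hφ : Monotone φ) (hφ' : Continuous φ) (hv : Tendsto v F (𝓝 0))
    (hu : ∀ i, u i ∈ Set.Icc a b) (hw : ∀ i, w i ≤ c) (h : ∀ᶠ i in F, φ (u i + v i) ≤ w i) :
    φ (F.liminf u) ≤ F.liminf w := by
  have hbelow : IsBoundedUnder (· ≥ ·) F fun i => u i + v i :=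
    isBoundedUnder_ge_add (isBoundedUnder_of ⟨a, fun i => (hu i).1⟩) hv.isBoundedUnder_ge
  rw [map_liminf_eq_liminf_map_add hφ hφ' hv hu]
  exact liminf_le_liminf h (hφ.isBoundedUnder_ge_comp hbelow)
    (isBoundedUnder_of ⟨c, hw⟩).isCoboundedUnder_ge

lemma liminf_le_map_liminf (hφ : Monotone φ) (hφ' : Continuous φ) (hv : Tendsto v F (𝓝 0))
    (hu : ∀ i, u i ∈ Set.Icc a b) (hw : ∀ i, c ≤ w i) (h : ∀ᶠ i in F, w i ≤ φ (u i + v i)) :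
    F.liminf w ≤ φ (F.liminf u) := by
  have habove : IsBoundedUnder (· ≤ ·) F fun i => u i + v i :=
    isBoundedUnder_le_add (isBoundedUnder_of ⟨b, fun i => (hu i).2⟩) hv.isBoundedUnder_le
  rw [map_liminf_eq_liminf_map_add hφ hφ' hv hu]
  exact liminf_le_liminf h (isBoundedUnder_of ⟨c, hw⟩)
    (hφ.isBoundedUnder_le_comp habove).isCoboundedUnder_ge

end Liminf

section PrefixQuantities

variable (x : ℕ → Bool) (k M : ℕ)

lemma gammaWord_add : gammaWord k x (M + k) = minErrorRate x k M := by
  have herrors (f : (Fin k → Bool) → Bool) :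
      ((Finset.Ico k (M + k)).filter fun i => x i ≠ f fun j => x (i - k + j)).card =
        predictionErrors x k M f := by
    rw [predictionErrors, Finset.card_filter, Finset.card_filter, Finset.sum_Ico_eq_sum_range,
      Nat.add_sub_cancel]
    simp only [add_comm k, Nat.add_sub_cancel]
    rfl
  rw [gammaWord, Finset.inf'_univ_eq_ciInf, one_div_mul_eq_div, Nat.cast_add, add_sub_cancel_right]
  simp only [herrors, minErrorRate]

lemma occ_add (u : Fin k → Bool) : occ x (M + k) (List.ofFn u) = blockCount x k (M + 1) u := by
  have hlength : M + k + 1 - k = M + 1 := by omega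
  simp only [occ, blockCount, factor, List.length_ofFn, hlength]
  congr! 2 with i
  exact List.ofFn_inj

lemma hBlock_add : hBlock k x (M + k) = entropyRate x k (M + 1) := by
  have hlength : ((M + k : ℕ) : ℝ) - k + 1 = (M + 1 : ℕ) := by push_cast; ring
  simp only [hBlock, occ_add, hlength, entropyRate, blockEntropy, blockFreq, Real.negMulLog,
    Real.logb, Finset.mul_sum, Finset.sum_div]
  refine Finset.sum_congr rfl fun u _ => ?_
  ring

end PrefixQuantities

section LowerRates

/-- The lower limit `γ̲_k(x)` of the least error frequencies. -/
noncomputable def lowerErrorRate (x : ℕ → Bool) (k : ℕ) : ℝ :=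
  atTop.liminf fun M => minErrorRate x k M

/-- The lower limit of the block entropies per letter. -/
noncomputable def lowerEntropyRate (x : ℕ → Bool) (k : ℕ) : ℝ :=
  atTop.liminf fun M => entropyRate x k M

variable (x : ℕ → Bool) (k : ℕ)

lemma lowerErrorRate_mem_Icc : lowerErrorRate x k ∈ Set.Icc 0 2⁻¹ :=
  liminf_mem_Icc (minErrorRate_mem_Icc x k)

lemma lowerEntropyRate_mem_Icc : lowerEntropyRate x k ∈ Set.Icc 0 1 :=
  liminf_mem_Icc (entropyRate_mem_Icc x k)

lemma gammaLow_eq_liminf : gammaLow x = atTop.liminf (lowerErrorRate x) := by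
  unfold gammaLow
  congr! with k
  rw [← liminf_nat_add _ k]
  simp only [gammaWord_add, lowerErrorRate]

lemma hLow_eq_liminf : hLow x = atTop.liminf (lowerEntropyRate x) := by
  unfold hLow
  congr! with k
  rw [lowerEntropyRate, ← liminf_nat_add _ k, ← liminf_nat_add (entropyRate x k) 1]
  simp only [hBlock_add]

lemma gammaLow_mem_Icc : gammaLow x ∈ Set.Icc 0 2⁻¹ :=
  gammaLow_eq_liminf x ▸ liminf_mem_Icc (lowerErrorRate_mem_Icc x)

variable {k}

lemma two_mul_lowerErrorRate_le (hk : 0 < k) : 2 * lowerErrorRate x k ≤ lowerEntropyRate x k := by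
  have hboundary : Tendsto (fun M : ℕ => -((k : ℝ) / M)) atTop (𝓝 0) := by
    simpa using (tendsto_const_div_atTop_nhds_zero_nat (k : ℝ)).neg
  exact map_liminf_le_liminf (monotone_id.const_mul zero_le_two) (by fun_prop) hboundary
    (minErrorRate_mem_Icc x k) (fun M => (entropyRate_mem_Icc x k M).2)
    (Eventually.of_forall fun M => two_mul_minErrorRate_sub_le_entropyRate x M hk)

lemma lowerEntropyRate_le {m : ℕ} (hk : 0 < k) (hmk : m ≤ k) :
    lowerEntropyRate x k ≤ m / k + monoBinEntropy (lowerErrorRate x m) :=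
  liminf_le_map_liminf (φ := fun t => (m / k : ℝ) + monoBinEntropy t)
    (monotone_const.add monotone_monoBinEntropy) (continuous_const.add continuous_monoBinEntropy)
    (tendsto_const_div_atTop_nhds_zero_nat (k : ℝ)) (minErrorRate_mem_Icc x m)
    (fun M => (entropyRate_mem_Icc x k M).1)
    (Eventually.of_forall fun M => entropyRate_le x M hk hmk)

lemma hLow_le_monoBinEntropy (m : ℕ) : hLow x ≤ monoBinEntropy (lowerErrorRate x m) := by
  have hlim : Tendsto (fun k : ℕ => m / k + monoBinEntropy (lowerErrorRate x m)) atTop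
      (𝓝 (monoBinEntropy (lowerErrorRate x m))) := by
    simpa using (tendsto_const_div_atTop_nhds_zero_nat (m : ℝ)).add_const
      (monoBinEntropy (lowerErrorRate x m))
  rw [hLow_eq_liminf, ← hlim.liminf_eq]
  refine liminf_le_liminf ?_ ?_ hlim.isCoboundedUnder_ge
  · filter_upwards [eventually_gt_atTop 0, eventually_ge_atTop m] with k hk hmk
    exact lowerEntropyRate_le x hk hmk
  · exact isBoundedUnder_of ⟨0, fun k => (lowerEntropyRate_mem_Icc x k).1⟩

end LowerRates

theorem rauzy_lower_gamma_liminf (x : ℕ → Bool) :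
    2 * gammaLow x ≤ hLow x ∧ hLow x ≤ binEntropy (gammaLow x) := by
  constructor
  · rw [gammaLow_eq_liminf, hLow_eq_liminf]
    refine map_liminf_le_liminf (monotone_id.const_mul zero_le_two) (by fun_prop)
      tendsto_const_nhds (lowerErrorRate_mem_Icc x) (fun k => (lowerEntropyRate_mem_Icc x k).2) ?_
    filter_upwards [eventually_gt_atTop 0] with k hk
    simpa using two_mul_lowerErrorRate_le x hk
  · rw [← monoBinEntropy_of_mem (gammaLow_mem_Icc x), gammaLow_eq_liminf,
      ← liminf_const (f := (atTop : Filter ℕ)) (hLow x)]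
    exact liminf_le_map_liminf monotone_monoBinEntropy continuous_monoBinEntropy
      tendsto_const_nhds (lowerErrorRate_mem_Icc x) (fun _ => le_rfl)
      (Eventually.of_forall fun m => by simpa using hLow_le_monoBinEntropy x m)
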